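/- For every 0 ≤ i ≤ s, the i-th Fitting ideal of the ℤ[G]-module 𝓘_I, i.e. the ideal Fitt_i(M_s(ν_1,…,ν_s,τ_1,…,τ_s)) of ℤ[G] generated by the (s−i)×(s−i) minors of the presentation matrix M_s of 𝓘_I, equals J_i; that is, Fitt_{0,ℤ[G]}(𝓘_I) = (ν_I) and, for 1 ≤ i ≤ s, Fitt_{i,ℤ[G]}(𝓘_I) = Z_i + Z_{i+1}𝓘_I + ⋯ + Z_s𝓘_I^{s−i}. -/

import Mathlib

open MonoidAlgebra Finset

/-- The sum `ν_H = Σ_{σ ∈ H} σ` of the elements of a subgroup `H` in the group algebra. -/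
noncomputable def nuElt (R : Type) [CommRing R] {G : Type} [CommGroup G] [Fintype G]
    (H : Subgroup G) : MonoidAlgebra R G :=
  letI := Classical.decPred (· ∈ H)
  ∑ σ ∈ Finset.univ.filter (· ∈ H), MonoidAlgebra.of R G σ

/-- `Fitt_i(A)`: the ideal generated by the `(n-i) × (n-i)` minors of a matrix `A`
with `n` columns (so `Fitt_i(A) = (1)` for `i ≥ n`, and `(0)` if `A` has fewer than
`n - i` rows). -/
noncomputable def fittMat {R : Type} [CommRing R] {m n : Type} [Fintype m] [Fintype n]
    (A : Matrix m n R) (i : ℕ) : Ideal R :=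
  Ideal.span {x : R |
    ∃ (r : Fin (Fintype.card n - i) → m) (c : Fin (Fintype.card n - i) → n),
      x = (A.submatrix r c).det}

/-- The index type for the rows of `N_s`: pairs `l < l'`. -/
abbrev rowPairs (s : ℕ) := {p : Fin s × Fin s // p.1 < p.2}

/-- The matrix `N_s(t_1, …, t_s)`: row `(l, l')` has `-t_{l'}` in column `l`,
`t_l` in column `l'`, and `0` elsewhere. -/
noncomputable def Nmat {R : Type} [CommRing R] {s : ℕ} (t : Fin s → R) :
    Matrix (rowPairs s) (Fin s) R :=
  fun p l => if l = p.val.1 then -t p.val.2 else if l = p.val.2 then t p.val.1 else 0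

/-- The matrix `M_s(ν_1, …, ν_s, τ_1, …, τ_s)`: `N_s(τ_1, …, τ_s)` with `s` extra rows
appended, the `l`-th of which has `ν_l` in column `l` and `0` elsewhere. -/
noncomputable def Mmat {R : Type} [CommRing R] {s : ℕ} (ν t : Fin s → R) :
    Matrix (Fin s ⊕ rowPairs s) (Fin s) R :=
  Sum.elim (fun l l' => if l' = l then ν l else 0) (Nmat t)

/-- `I = I_1 × ⋯ × I_s` where `I_l` is the (possibly trivial) cyclic subgroup generated
by `σ l`: every element of `I` is, in a unique way, the product of elements of the
subgroups `⟨σ l⟩`. -/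
def IsDecomp {G : Type} [CommGroup G] (I : Subgroup G) {s : ℕ} (σ : Fin s → G) : Prop :=
  (∀ l, σ l ∈ I) ∧
    ∀ g ∈ I, ∃! x : ∀ l, Subgroup.zpowers (σ l), (∏ l, ((x l : G))) = g

/-- The ideal `Z_i` generated by the products `ν_{l_1} ⋯ ν_{l_{s-i}}` over all
`(s-i)`-element subsets `{l_1 < ⋯ < l_{s-i}}` of `{1, …, s}`. -/
noncomputable def Zideal {G : Type} [CommGroup G] [Fintype G] {s : ℕ} (σ : Fin s → G)
    (i : ℕ) : Ideal (MonoidAlgebra ℤ G) :=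
  Ideal.span {x | ∃ T : Finset (Fin s), T.card = s - i ∧
    x = ∏ l ∈ T, nuElt ℤ (Subgroup.zpowers (σ l))}

/-- The augmentation-type kernel ideal `𝓘_H = ker(ℤ[G] → ℤ[G/H])`. -/
noncomputable def kerIdeal {G : Type} [CommGroup G] [Fintype G] (H : Subgroup G) :
    Ideal (MonoidAlgebra ℤ G) :=
  RingHom.ker (MonoidAlgebra.mapDomainRingHom ℤ (QuotientGroup.mk' H))

section Helpers

variable {R : Type} [CommRing R] {s : ℕ}

theorem hlp_inl (ν t : Fin s → R) (l x : Fin s) :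
    Mmat ν t (Sum.inl l) x = if x = l then ν l else 0 := rfl

theorem hlp_inr (ν t : Fin s → R) (q : rowPairs s) (x : Fin s) :
    Mmat ν t (Sum.inr q) x = Nmat t q x := rfl

theorem hlp_nmat_mem (t : Fin s → R) (p : rowPairs s) (x : Fin s) :
    Nmat t p x ∈ Ideal.span (Set.range t) := by
  unfold Nmat
  split_ifs
  · exact neg_mem (Ideal.subset_span ⟨_, rfl⟩)
  · exact Ideal.subset_span ⟨_, rfl⟩
  · exact zero_mem _

/-- Generic version of `Z_i`. -/
noncomputable def hlpZ (ν : Fin s → R) (i : ℕ) : Ideal R :=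
  Ideal.span {x | ∃ T : Finset (Fin s), T.card = s - i ∧ x = ∏ l ∈ T, ν l}

theorem hlp_minor_le (ν t : Fin s → R) (i : ℕ) (hi : i ≤ s) (k : ℕ) (hk : k = s - i)
    (r : Fin k → Fin s ⊕ rowPairs s) (c : Fin k → Fin s) :
    ((Mmat ν t).submatrix r c).det ∈
      ∑ j ∈ Finset.range (s - i + 1), hlpZ ν (i + j) * (Ideal.span (Set.range t)) ^ j := by
  classical
  by_cases hc : Function.Injective c
  swap
  · simp only [Function.Injective, not_forall] at hc
    obtain ⟨a, b, hab, hne⟩ := hc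
    rw [Matrix.det_zero_of_column_eq hne (fun x => by simp [hab])]
    exact zero_mem _
  rw [Matrix.det_apply]
  refine Ideal.sum_mem _ fun p _ => ?_
  have key : (∏ a, (Mmat ν t).submatrix r c (p a) a) ∈
      ∑ j ∈ Finset.range (s - i + 1), hlpZ ν (i + j) * (Ideal.span (Set.range t)) ^ j := by
    set B : Finset (Fin k) := Finset.univ.filter (fun a => (r (p a)).isLeft) with hB
    have hBk : B.card + Bᶜ.card = k := by
      have := Finset.card_add_card_compl B
      simpa using this
    rw [Ideal.sum_eq_sup]
    have hle := Finset.le_sup (s := Finset.range (s - i + 1))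
      (f := fun j => hlpZ ν (i + j) * (Ideal.span (Set.range t)) ^ j) (b := Bᶜ.card)
      (by simp; omega)
    apply hle
    rw [← Finset.prod_mul_prod_compl B]
    refine Ideal.mul_mem_mul ?_ ?_
    · by_cases h0 : ∃ a ∈ B, (Mmat ν t).submatrix r c (p a) a = 0
      · obtain ⟨a, ha, h0⟩ := h0
        have h00 : ∏ a ∈ B, (Mmat ν t).submatrix r c (p a) a = 0 := Finset.prod_eq_zero ha h0
        rw [h00]
        exact zero_mem _
      · push Not at h0
        refine Ideal.subset_span ⟨B.image c, ?_, ?_⟩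
        · rw [Finset.card_image_of_injective _ hc]; omega
        · rw [Finset.prod_image (fun a _ b _ h => hc h)]
          refine Finset.prod_congr rfl fun a ha => ?_
          have h1 := h0 a ha
          have h2 : (r (p a)).isLeft := by simpa [hB] using ha
          rw [Sum.isLeft_iff] at h2
          obtain ⟨l, hl⟩ := h2
          simp only [Matrix.submatrix_apply, hl, hlp_inl] at h1 ⊢
          split_ifs at h1 ⊢ with h3
          · rw [h3]
          · exact absurd rfl h1
    · rw [← Finset.prod_const]
      refine Ideal.prod_mem_prod fun a ha => ?_
      have h2 : (r (p a)).isLeft = false := by simpa [hB] using ha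
      rw [Sum.isLeft_eq_false, Sum.isRight_iff] at h2
      obtain ⟨q, hq⟩ := h2
      simp only [Matrix.submatrix_apply, hq, hlp_inr]
      exact hlp_nmat_mem t q _
  rcases Int.units_eq_one_or (Equiv.Perm.sign p) with h | h
  · rw [h, one_smul]; exact key
  · rw [h, Units.neg_smul, one_smul]; exact neg_mem key

/-- Ideal of `k × k` minors whose rows are supported in `A`. -/
noncomputable def hlpK {m : Type} (M : Matrix m (Fin s) R) (A : Finset (Fin s)) (k : ℕ) :
    Ideal R :=
  Ideal.span {y | ∃ (r : Fin k → m) (c : Fin k → Fin s),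
    (∀ a, ∀ x ∉ A, M (r a) x = 0) ∧ y = (M.submatrix r c).det}

theorem hlpK_step {m : Type} (M : Matrix m (Fin s) R) (A : Finset (Fin s)) (k : ℕ)
    (x : Fin s) (hx : x ∉ A) (ρ : m) (hρ : ∀ z ∉ insert x A, M ρ z = 0) (y : R)
    (hy : y ∈ hlpK M A k) : M ρ x * y ∈ hlpK M (insert x A) (k + 1) := by
  unfold hlpK at hy
  induction hy using Submodule.span_induction with
  | zero => simp
  | add a b _ _ ha hb => rw [mul_add]; exact add_mem ha hb
  | smul a b _ hb =>
    rw [smul_eq_mul, mul_left_comm]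
    exact Ideal.mul_mem_left _ _ hb
  | mem y hy =>
    obtain ⟨r, c, hr, rfl⟩ := hy
    refine Ideal.subset_span ⟨Fin.cons ρ r, Fin.cons x c, ?_, ?_⟩
    · intro a
      refine Fin.cases ?_ (fun a => ?_) a
      · simpa using hρ
      · intro z hz
        simp only [Finset.mem_insert, not_or] at hz
        simpa using hr a z hz.2
    · rw [Matrix.det_succ_column_zero, Fin.sum_univ_succ]
      rw [Finset.sum_eq_zero]
      · simp only [Fin.val_zero, pow_zero, one_mul, add_zero, Matrix.submatrix_apply,
          Fin.cons_zero, Matrix.submatrix_submatrix]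
        congr 2
      · intro a _
        simp [hr a x hx]

theorem hlpK_mono {m : Type} (M : Matrix m (Fin s) R) {A B : Finset (Fin s)} (h : A ⊆ B)
    (k : ℕ) : hlpK M A k ≤ hlpK M B k := by
  refine Ideal.span_mono ?_
  rintro y ⟨r, c, hr, rfl⟩
  exact ⟨r, c, fun a x hx => hr a x fun h' => hx (h h'), rfl⟩

theorem hlp_base (ν t : Fin s → R) (T : Finset (Fin s)) :
    ∏ l ∈ T, ν l ∈ hlpK (Mmat ν t) T T.card := by
  classical
  induction T using Finset.induction_on with
  | empty =>
    refine Ideal.subset_span ⟨Fin.elim0, Fin.elim0, fun a => a.elim0, ?_⟩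
    simp
  | insert x T hx ih =>
    rw [Finset.prod_insert hx, Finset.card_insert_of_notMem hx]
    have := hlpK_step (Mmat ν t) T T.card x hx (Sum.inl x) (fun z hz => by
      simp only [Finset.mem_insert, not_or] at hz
      simp [hlp_inl, hz.1]) _ ih
    simpa [hlp_inl] using this

theorem hlp_row (t : Fin s → R) (x l : Fin s) (h : x ≠ l) :
    ∃ q : rowPairs s, (∀ z, z ≠ x → z ≠ l → Nmat t q z = 0) ∧
      (Nmat t q x = t l ∨ Nmat t q x = - t l) := by
  rcases lt_or_gt_of_ne h with h' | h'
  · refine ⟨⟨(x, l), h'⟩, fun z h1 h2 => ?_, Or.inr ?_⟩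
    · simp [Nmat, h1, h2]
    · simp [Nmat]
  · refine ⟨⟨(l, x), h'⟩, fun z h1 h2 => ?_, Or.inl ?_⟩
    · simp [Nmat, h1, h2]
    · simp [Nmat, h]

theorem hlp_mono_mem (ν t : Fin s → R) (T : Finset (Fin s)) (L : List (Fin s)) :
    ∀ V : Finset (Fin s), (∀ l ∈ L, l ∈ V) → Disjoint T V → L.length + 1 ≤ V.card →
      (∏ l ∈ T, ν l) * (L.map t).prod ∈ hlpK (Mmat ν t) (T ∪ V) (T.card + L.length) := by
  classical
  induction L with
  | nil =>
    intro V _ _ _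
    simpa using hlpK_mono _ Finset.subset_union_left _ (hlp_base ν t T)
  | cons l L ih =>
    intro V hLV hTV hcard
    obtain ⟨x, hxV, hxL⟩ : ∃ x ∈ V, x ∉ (l :: L).toFinset := by
      by_contra hcon
      push Not at hcon
      have h1 := Finset.card_le_card (fun x hx => hcon x hx : V ⊆ (l :: L).toFinset)
      have h2 := List.toFinset_card_le (l :: L)
      omega
    simp only [List.toFinset_cons, Finset.mem_insert, List.mem_toFinset, not_or] at hxL
    have hxT : x ∉ T := fun h => Finset.disjoint_left.mp hTV h hxV
    have h3 := ih (V.erase x)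
      (fun z hz => Finset.mem_erase.mpr ⟨fun h => hxL.2 (h ▸ hz), hLV z (by simp [hz])⟩)
      (hTV.mono_right (Finset.erase_subset _ _))
      (by rw [Finset.card_erase_of_mem hxV]; simp at hcard; omega)
    obtain ⟨q, hq0, hq⟩ := hlp_row t x l hxL.1
    have hlV : l ∈ V := hLV l (by simp)
    have hx : x ∉ T ∪ V.erase x := by simp [hxT]
    have hins : insert x (T ∪ V.erase x) = T ∪ V := by
      rw [← Finset.union_insert, Finset.insert_erase hxV]
    have h4 := hlpK_step (Mmat ν t) _ _ x hx (Sum.inr q) (fun z hz => by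
      rw [hins] at hz
      simp only [hlp_inr]
      refine hq0 z ?_ ?_
      · rintro rfl; exact hz (by simp [hxV])
      · rintro rfl; exact hz (by simp [hlV])) _ h3
    rw [hins] at h4
    simp only [hlp_inr] at h4
    have h5 : (∏ l ∈ T, ν l) * ((l :: L).map t).prod =
        t l * ((∏ l ∈ T, ν l) * (L.map t).prod) := by
      rw [List.map_cons, List.prod_cons]; ring
    rw [h5]
    rcases hq with hq | hq
    · rw [hq] at h4; exact h4
    · rw [hq, neg_mul] at h4; exact (neg_mem_iff (x := _)).mp h4

theorem hlpK_le_fitt (ν t : Fin s → R) (A : Finset (Fin s)) (k i : ℕ) (hk : k = s - i) :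
    hlpK (Mmat ν t) A k ≤ fittMat (Mmat ν t) i := by
  have hk' : k = Fintype.card (Fin s) - i := by simpa using hk
  subst hk'
  refine Ideal.span_mono ?_
  rintro y ⟨r, c, _, rfl⟩
  exact ⟨r, c, rfl⟩

open scoped Pointwise in
theorem hlp_fitt_pos (ν t : Fin s → R) (hν : ∀ l, ν l * t l = 0) (i : ℕ) (h1 : 1 ≤ i)
    (hi : i ≤ s) : fittMat (Mmat ν t) i =
      ∑ j ∈ Finset.range (s - i + 1), hlpZ ν (i + j) * (Ideal.span (Set.range t)) ^ j := by
  classical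
  apply le_antisymm
  · refine Ideal.span_le.mpr ?_
    rintro y ⟨r, c, rfl⟩
    exact hlp_minor_le ν t i hi _ (by simp) r c
  · rw [Ideal.sum_eq_sup]
    refine Finset.sup_le fun j hj => ?_
    have hj' : j ≤ s - i := by simp at hj; omega
    have hp : (Ideal.span (Set.range t)) ^ j = Ideal.span ((Set.range t) ^ j) :=
      Submodule.span_pow _ _
    rw [hp, hlpZ, Ideal.span_mul_span']
    refine Ideal.span_le.mpr ?_
    rintro y hy
    obtain ⟨_, ⟨T, hT, rfl⟩, z, hz, rfl⟩ := Set.mem_mul.mp hy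
    obtain ⟨f, rfl⟩ := Set.mem_pow.mp hz
    choose g hg using fun a => (f a).2
    have hL : (List.ofFn fun a => (f a : R)) = (List.ofFn g).map t := by
      rw [List.map_ofFn]
      congr 1
      funext a
      exact (hg a).symm
    simp only [SetLike.mem_coe]
    rw [hL]
    by_cases hin : ∃ l ∈ List.ofFn g, l ∈ T
    · obtain ⟨l, hl, hlT⟩ := hin
      have d1 : ν l ∣ ∏ l ∈ T, ν l := Finset.dvd_prod_of_mem _ hlT
      have d2 : t l ∣ ((List.ofFn g).map t).prod :=
        List.dvd_prod (List.mem_map.mpr ⟨l, hl, rfl⟩)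
      have d3 := mul_dvd_mul d1 d2
      rw [hν l, zero_dvd_iff] at d3
      rw [d3]
      exact zero_mem _
    · push Not at hin
      have := hlp_mono_mem ν t T (List.ofFn g) Tᶜ
        (fun l hl => Finset.mem_compl.mpr (hin l hl)) disjoint_compl_right
        (by rw [Finset.card_compl]; simp; omega)
      refine hlpK_le_fitt ν t _ _ i ?_ this
      simp; omega

theorem hlp_dot (t : Fin s → R) (q : rowPairs s) : ∑ l, Nmat t q l * t l = 0 := by
  classical
  have hne : q.val.1 ≠ q.val.2 := ne_of_lt q.2
  rw [Finset.sum_eq_add q.val.1 q.val.2 hne]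
  · simp [Nmat, hne.symm]; ring
  · intro l _ h
    simp [Nmat, h.1, h.2]
  · simp
  · simp

theorem hlp_top_minor (ν t : Fin s → R) (hν : ∀ l, ν l * t l = 0) (k : ℕ) (hk : k = s)
    (r : Fin k → Fin s ⊕ rowPairs s) (c : Fin k → Fin s) :
    ((Mmat ν t).submatrix r c).det ∈ Ideal.span {∏ l, ν l} := by
  classical
  by_cases hc : Function.Injective c
  swap
  · simp only [Function.Injective, not_forall] at hc
    obtain ⟨a, b, hab, hne⟩ := hc
    rw [Matrix.det_zero_of_column_eq hne (fun x => by simp [hab])]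
    exact zero_mem _
  have hcb : Function.Bijective c :=
    (Fintype.bijective_iff_injective_and_card c).mpr ⟨hc, by simp [hk]⟩
  let u : Fin k → R := fun a => Sum.elim ν (fun _ => 1) (r a)
  have hfac : (Mmat ν t).submatrix r c =
      Matrix.of fun a b => u a * (Mmat (fun _ => 1) t).submatrix r c a b := by
    ext a b
    simp only [Matrix.submatrix_apply, Matrix.of_apply, u]
    rcases r a with l | q <;> simp [hlp_inl, hlp_inr]
  rw [hfac, Matrix.det_mul_column]
  by_cases hall : ∀ l, ∃ a, r a = Sum.inl l
  · choose g hg using hall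
    have hginj : Function.Injective g := fun x y h => by
      have := hg x
      rw [h, hg y] at this
      exact (Sum.inl_injective this).symm
    have hgb : Function.Bijective g :=
      (Fintype.bijective_iff_injective_and_card g).mpr ⟨hginj, by simp [hk]⟩
    have : ∏ a, u a = ∏ l, ν l := by
      refine (Fintype.prod_bijective g hgb _ _ fun l => ?_).symm
      simp [u, hg]
    rw [this]
    exact Ideal.mul_mem_right _ _ (Ideal.subset_span rfl)
  · push Not at hall
    obtain ⟨l0, hl0⟩ := hall
    set y := ∏ a, u a with hy
    set D := ((Mmat (fun _ => (1 : R)) t).submatrix r c).det with hD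
    suffices h : y * D = 0 by rw [h]; exact zero_mem _
    let An : Ideal R := Ideal.torsionOf R R y
    let X : Fin s → MvPolynomial (Fin s) ℤ := fun l =>
      if ∃ a, r a = Sum.inl l then 0 else MvPolynomial.X l
    let φ : MvPolynomial (Fin s) ℤ →+* (R ⧸ An) :=
      MvPolynomial.eval₂Hom (Int.castRingHom _) (fun l => Ideal.Quotient.mk An (t l))
    have hφ : ∀ l, φ (X l) = Ideal.Quotient.mk An (t l) := by
      intro l
      simp only [X]
      split_ifs with h
      · obtain ⟨a, ha⟩ := h
        rw [map_zero]
        symm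
        rw [Ideal.Quotient.eq_zero_iff_mem, Ideal.mem_torsionOf_iff, smul_eq_mul]
        have d1 : ν l ∣ y := by
          have : u a = ν l := by simp [u, ha]
          rw [← this]
          exact Finset.dvd_prod_of_mem _ (Finset.mem_univ a)
        have d3 := mul_dvd_mul (dvd_refl (t l)) d1
        rwa [mul_comm (t l) (ν l), hν l, zero_dvd_iff] at d3
      · simp [φ]
    have hdet : ((Mmat (fun _ => (1 : MvPolynomial (Fin s) ℤ)) X).submatrix r c).det = 0 := by
      rw [← Matrix.exists_mulVec_eq_zero_iff]
      refine ⟨fun a => X (c a), ?_, ?_⟩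
      · obtain ⟨a, ha⟩ := hcb.2 l0
        intro h0
        have := congrFun h0 a
        simp [ha, X, hl0] at this
      · funext a
        simp only [Matrix.mulVec, dotProduct, Matrix.submatrix_apply, Pi.zero_apply]
        rw [Fintype.sum_bijective c hcb _
          (fun l => Mmat (fun _ => (1 : MvPolynomial (Fin s) ℤ)) X (r a) l * X l)
          (fun _ => rfl)]
        rcases hra : r a with l | q
        · have : X l = 0 := by
            simp only [X]
            rw [if_pos ⟨a, hra⟩]
          simp [hlp_inl, this]
        · simpa [hlp_inr] using hlp_dot X q
    have hD0 : Ideal.Quotient.mk An D = 0 := by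
      rw [← map_zero φ, ← hdet, hD, RingHom.map_det, RingHom.map_det]
      congr 1
      ext a b
      simp only [RingHom.mapMatrix_apply, Matrix.map_apply, Matrix.submatrix_apply]
      rcases r a with l | q
      · simp only [hlp_inl]
        split_ifs <;> simp
      · simp only [hlp_inr, Nmat]
        split_ifs <;> simp [hφ]
    rw [Ideal.Quotient.eq_zero_iff_mem, Ideal.mem_torsionOf_iff, smul_eq_mul] at hD0
    rw [mul_comm]; exact hD0

theorem hlp_fitt_zero (ν t : Fin s → R) (hν : ∀ l, ν l * t l = 0) :
    fittMat (Mmat ν t) 0 = Ideal.span {∏ l, ν l} := by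
  apply le_antisymm
  · refine Ideal.span_le.mpr ?_
    rintro y ⟨r, c, rfl⟩
    exact hlp_top_minor ν t hν _ (by simp) r c
  · rw [Ideal.span_singleton_le_iff_mem]
    exact hlpK_le_fitt ν t _ _ 0 (by simp) (hlp_base ν t Finset.univ)

end Helpers

section GroupHelpers

variable {G : Type} [CommGroup G] [Fintype G]

theorem hlp_nu_eq (H : Subgroup G) [Fintype H] :
    nuElt ℤ H = ∑ x : H, MonoidAlgebra.of ℤ G (x : G) := by
  classical
  unfold nuElt
  exact Finset.sum_subtype _ (fun x => by simp) _

theorem hlp_nu_tau (g : G) :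
    nuElt ℤ (Subgroup.zpowers g) * (MonoidAlgebra.of ℤ G g - 1) = 0 := by
  classical
  rw [hlp_nu_eq, mul_sub, mul_one, sub_eq_zero, Finset.sum_mul]
  refine Fintype.sum_bijective
    (fun x => x * ⟨g, Subgroup.mem_zpowers g⟩) (Group.mulRight_bijective _) _ _ fun x => ?_
  rw [← map_mul]; rfl

theorem hlp_nu_prod (I : Subgroup G) {s : ℕ} (σ : Fin s → G) (hdec : IsDecomp I σ) :
    ∏ l, nuElt ℤ (Subgroup.zpowers (σ l)) = nuElt ℤ I := by
  classical
  simp only [hlp_nu_eq]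
  rw [Fintype.prod_sum]
  have hmem : ∀ x : (∀ l, Subgroup.zpowers (σ l)), (∏ l, (x l : G)) ∈ I := fun x =>
    Subgroup.prod_mem _ fun l _ => (Subgroup.zpowers_le.mpr (hdec.1 l)) (x l).2
  refine Fintype.sum_bijective (fun x => (⟨∏ l, (x l : G), hmem x⟩ : I)) ⟨?_, ?_⟩ _ _ ?_
  · intro x y h
    have h' : (∏ l, (x l : G)) = ∏ l, (y l : G) := congrArg Subtype.val h
    exact (hdec.2 _ (hmem y)).unique h' rfl
  · rintro ⟨g, hg⟩
    obtain ⟨x, hx, _⟩ := hdec.2 g hg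
    exact ⟨x, Subtype.ext hx⟩
  · intro x
    rw [map_prod]

theorem hlp_ker (I : Subgroup G) {s : ℕ} (σ : Fin s → G) (hdec : IsDecomp I σ) :
    kerIdeal I = Ideal.span (Set.range fun l => MonoidAlgebra.of ℤ G (σ l) - 1) := by
  classical
  set J := Ideal.span (Set.range fun l => MonoidAlgebra.of ℤ G (σ l) - 1) with hJ
  apply le_antisymm
  · let f : G →* (MonoidAlgebra ℤ G ⧸ J) :=
      (Ideal.Quotient.mk J : MonoidAlgebra ℤ G →* _).comp (MonoidAlgebra.of ℤ G)
    have hσ : ∀ l, σ l ∈ f.ker := by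
      intro l
      rw [MonoidHom.mem_ker]
      have : Ideal.Quotient.mk J (MonoidAlgebra.of ℤ G (σ l)) = Ideal.Quotient.mk J 1 :=
        Ideal.Quotient.eq.mpr (Ideal.subset_span ⟨l, rfl⟩)
      simpa [f] using this
    have hI : I ≤ f.ker := by
      intro g hg
      obtain ⟨x, hx, _⟩ := hdec.2 g hg
      rw [← hx]
      exact Subgroup.prod_mem _ fun l _ => (Subgroup.zpowers_le.mpr (hσ l)) (x l).2
    let χ : MonoidAlgebra ℤ (G ⧸ I) →ₐ[ℤ] (MonoidAlgebra ℤ G ⧸ J) :=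
      MonoidAlgebra.lift ℤ _ _ (QuotientGroup.lift I f hI)
    have hcomp : (χ : MonoidAlgebra ℤ (G ⧸ I) →+* _).comp
        (MonoidAlgebra.mapDomainRingHom ℤ (QuotientGroup.mk' I)) = Ideal.Quotient.mk J := by
      refine MonoidAlgebra.ringHom_ext' (Subsingleton.elim _ _) ?_
      ext g
      simp [χ, f]
    intro x hx
    rw [kerIdeal, RingHom.mem_ker] at hx
    rw [← Ideal.Quotient.eq_zero_iff_mem, ← hcomp, RingHom.comp_apply, hx, map_zero]
  · refine Ideal.span_le.mpr ?_
    rintro _ ⟨l, rfl⟩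
    simp only [SetLike.mem_coe, kerIdeal, RingHom.mem_ker, map_sub, map_one, sub_eq_zero]
    have : (QuotientGroup.mk (σ l) : G ⧸ I) = 1 := (QuotientGroup.eq_one_iff _).mpr (hdec.1 l)
    simp [this, MonoidAlgebra.one_def]

end GroupHelpers

/-- `Fitt_{i,ℤ[G]}(𝓘_I) = J_i` for `0 ≤ i ≤ s`, where the `i`-th Fitting
ideal of `𝓘_I` is computed as `Fitt_i` of the presentation matrix
`M_s(ν_1, …, ν_s, τ_1, …, τ_s)` of `𝓘_I`: it is `(ν_I)` for `i = 0` and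
`Σ_{j=0}^{s-i} Z_{i+j} 𝓘_I^j` for `1 ≤ i ≤ s`. -/
theorem statement1 {G : Type} [CommGroup G] [Fintype G] (I : Subgroup G)
    {s : ℕ} (σ : Fin s → G) (hdec : IsDecomp I σ) :
    fittMat (Mmat (fun l => nuElt ℤ (Subgroup.zpowers (σ l)))
        (fun l => MonoidAlgebra.of ℤ G (σ l) - 1)) 0
      = Ideal.span {nuElt ℤ I} ∧
    ∀ i : ℕ, 1 ≤ i → i ≤ s →
      fittMat (Mmat (fun l => nuElt ℤ (Subgroup.zpowers (σ l)))
          (fun l => MonoidAlgebra.of ℤ G (σ l) - 1)) i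
        = ∑ j ∈ Finset.range (s - i + 1), Zideal σ (i + j) * (kerIdeal I) ^ j := by

  have hν : ∀ l, nuElt ℤ (Subgroup.zpowers (σ l)) * (MonoidAlgebra.of ℤ G (σ l) - 1) = 0 :=
    fun l => hlp_nu_tau (σ l)
  refine ⟨?_, fun i h1 hi => ?_⟩
  · rw [hlp_fitt_zero _ _ hν, hlp_nu_prod I σ hdec]
  · rw [hlp_fitt_pos _ _ hν i h1 hi, hlp_ker I σ hdec]
    rfl
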